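/- (Upper bound on the sufficient-length sum, equation (28).) Let C, D, m_h, m_v be positive integers with m_h ≥ D and m_v > D. Then, as an inequality of real numbers, ∑_{p=0}^{D−1} ⌈(⌈(m_h − p)/D⌉ − 1)/⌊m_v/D⌋⌉ < D + (m_h − D)/⌊m_v/D⌋ < D + D·(m_h − D)/(m_v − D) whenever m_h > D, and the first strict inequality holds (with the convention that the middle and right terms are real numbers) for all m_h ≥ D. -/

import Mathlib

open Finset

/-- The `p`-th polyphase length `⌈(m - p)/D⌉`. -/
def polyLen (D m p : ℕ) : ℤ := ⌈((m : ℚ) - (p : ℚ)) / (D : ℚ)⌉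

theorem polyLen_sum (D m : ℕ) (hD : 0 < D) : ∑ p ∈ Finset.range D, polyLen D m p = m := by
  have hDq : (0 : ℚ) < D := by exact_mod_cast hD
  induction m with
  | zero =>
    apply Finset.sum_eq_zero
    intro p hp
    have hp' : (p : ℚ) < D := by exact_mod_cast Finset.mem_range.mp hp
    have hp0 : (0 : ℚ) ≤ p := by positivity
    unfold polyLen
    rw [Int.ceil_eq_iff]
    constructor
    · rw [lt_div_iff₀ hDq]; push_cast; linarith
    · rw [div_le_iff₀ hDq]; push_cast; linarith
  | succ m ih =>
    have h1 := Finset.sum_range_succ (fun p => polyLen D (m+1) p) D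
    have h2 := Finset.sum_range_succ' (fun p => polyLen D (m+1) p) D
    have h3 : ∀ p, polyLen D (m+1) (p+1) = polyLen D m p := by
      intro p; unfold polyLen; push_cast; congr 2; ring
    have h4 : polyLen D (m+1) D = polyLen D (m+1) 0 - 1 := by
      unfold polyLen
      rw [← Int.ceil_sub_one]; congr 1; field_simp; simp
    simp only [h3] at h2
    rw [ih] at h2
    push_cast
    linarith

/-- Upper bound on the sufficient-length sum (equation (28)): for `m_h ≥ D` and
`m_v > D`, `∑_{p=0}^{D-1} ⌈(m_{h;p} - 1)/⌊m_v/D⌋⌉ < D + (m_h - D)/⌊m_v/D⌋`, and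
if moreover `m_h > D` then also
`D + (m_h - D)/⌊m_v/D⌋ < D + D·(m_h - D)/(m_v - D)`. -/
theorem suff_sum_upper_bound (C D mh mv : ℕ) (hC : 0 < C) (hD : 0 < D)
    (hmh : D ≤ mh) (hmv : D < mv) :
    (((∑ p ∈ Finset.range D, ⌈((polyLen D mh p : ℚ) - 1) / ((mv / D : ℕ) : ℚ)⌉ : ℤ) : ℝ)
        < (D : ℝ) + ((mh : ℝ) - (D : ℝ)) / ((mv / D : ℕ) : ℝ)) ∧
    (D < mh →
      (D : ℝ) + ((mh : ℝ) - (D : ℝ)) / ((mv / D : ℕ) : ℝ)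
        < (D : ℝ) + (D : ℝ) * ((mh : ℝ) - (D : ℝ)) / ((mv : ℝ) - (D : ℝ))) := by
  have hk : 0 < mv / D := Nat.div_pos hmv.le hD
  have hdiv : mv < D * (mv / D) + D := by
    have := Nat.lt_mul_div_succ mv hD
    rw [mul_add, mul_one] at this; exact this
  generalize mv / D = k at *
  have hkq : (0 : ℚ) < k := by exact_mod_cast hk
  constructor
  · have key : ((∑ p ∈ Finset.range D, ⌈((polyLen D mh p : ℚ) - 1) / (k : ℚ)⌉ : ℤ) : ℚ)
        < (D : ℚ) + ((mh : ℚ) - (D : ℚ)) / (k : ℚ) := by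
      have hs : (∑ p ∈ Finset.range D, (polyLen D mh p : ℚ)) = mh := by
        exact_mod_cast polyLen_sum D mh hD
      push_cast
      calc _ < ∑ p ∈ Finset.range D, (((polyLen D mh p : ℚ) - 1) / (k : ℚ) + 1) :=
            Finset.sum_lt_sum_of_nonempty (Finset.nonempty_range_iff.mpr hD.ne')
              (fun p _ => Int.ceil_lt_add_one _)
        _ = _ := by
            rw [Finset.sum_add_distrib, ← Finset.sum_div, Finset.sum_sub_distrib, hs]
            simp; ring
    generalize (∑ p ∈ Finset.range D, ⌈((polyLen D mh p : ℚ) - 1) / (k : ℚ)⌉ : ℤ) = S at *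
    have h := (Rat.cast_lt (K := ℝ)).mpr key
    simpa only [Rat.cast_add, Rat.cast_div, Rat.cast_sub, Rat.cast_natCast, Rat.cast_intCast] using h
  · intro h
    have hkr : (0 : ℝ) < k := by exact_mod_cast hk
    have h1 : (D : ℝ) < mh := by exact_mod_cast h
    have h2 : (D : ℝ) < mv := by exact_mod_cast hmv
    have h3 : (mv : ℝ) < D * k + D := by exact_mod_cast hdiv
    have h4 : (0 : ℝ) < mv - D := by linarith
    gcongr ?_ + ?_
    rw [div_lt_div_iff₀ hkr h4]
    nlinarith
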